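/- Let α > 0 and let k_l, k_s, d_l, d_s, γ, T_i, T_∞ be positive constants with ω = √(d_l/d_s). Then there exists exactly one x > 0 satisfying the equation (k_l T_∞ / (2^{α+1} d_l^{α/2+1} γ)) f₃(x) − (k_s T_i d_s^{(α−1)/2} / (γ d_l^{(α+1)/2})) f₁(x) = x^{α+1}. -/

import Mathlib

noncomputable def poch (a : ℝ) (s : ℕ) : ℝ := ∏ i ∈ Finset.range s, (a + i)

/-- Kummer's confluent hypergeometric function `M(a,b,z)`,
defined by the everywhere-convergent series `M(a,b,z) = Σ_{s} (a)_s z^s / ((b)_s s!)`. -/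
noncomputable def kummerM (a b z : ℝ) : ℝ :=
  ∑' s : ℕ, poch a s / (poch b s * (Nat.factorial s)) * z ^ s

/-- Tricomi's confluent hypergeometric function
`U(a,b,z) = (1/Γ(a)) ∫_0^∞ e^{−z t} t^{a−1} (1+t)^{b−a−1} dt`. -/
noncomputable def tricomiU (a b z : ℝ) : ℝ :=
  (1 / Real.Gamma a) *
    ∫ t in Set.Ioi (0:ℝ), Real.exp (-z * t) * t ^ (a - 1) * (1 + t) ^ (b - a - 1)

/-!
With positive constants `A` and `B` and `p = α + 1`, the equation reads
`A / (x M(x²)) = B / U(x²ω²) + x ^ p`. Since `M` is increasing with `M ≥ 1` on `[0, ∞)`, the left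
side decreases strictly from `∞` to `0`; since `U` is positive and decreasing, the right side is
positive and increasing. Two such graphs cross exactly once.
-/

open Filter MeasureTheory Set Topology

theorem existsUnique_eq_of_strictAntiOn_of_monotoneOn {f g : ℝ → ℝ} {a l x₀ : ℝ}
    (hf : StrictAntiOn f (Ioi a)) (hfc : ContinuousOn f (Ioi a))
    (hf_left : Tendsto f (𝓝[>] a) atTop) (hf_top : Tendsto f atTop (𝓝 l))
    (hg : MonotoneOn g (Ioi a)) (hgc : ContinuousOn g (Ioi a)) (hx₀ : a < x₀) (hl : l < g x₀) :
    ∃! x, a < x ∧ f x = g x := by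
  have g_le_f : ∀ᶠ x in 𝓝[>] a, g x ≤ f x := by
    filter_upwards [hf_left.eventually_ge_atTop (g x₀), Ioo_mem_nhdsGT hx₀] with x hfx hx
    exact (hg hx.1 hx₀ hx.2.le).trans hfx
  have f_le_g : ∀ᶠ x in atTop, f x ≤ g x := by
    filter_upwards [hf_top.eventually_le_const hl, eventually_ge_atTop x₀] with x hfx hx
    exact hfx.trans (hg hx₀ (hx₀.trans_le hx) hx)
  have not_both {x y : ℝ} (hx : a < x) (hxy : x < y) (hfx : f x = g x) : f y ≠ g y :=
    ((hf hx (hx.trans hxy) hxy).trans_le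
      (hfx.trans_le (hg hx (hx.trans hxy) hxy.le))).ne
  obtain ⟨x, hx, hfx⟩ := isPreconnected_Ioi.intermediate_value₂_eventually₂
    (le_principal_iff.2 (Ioi_mem_atTop a)) (le_principal_iff.2 self_mem_nhdsWithin)
    hfc hgc f_le_g g_le_f
  refine ⟨x, ⟨hx, hfx⟩, fun y ⟨hy, hfy⟩ => ?_⟩
  rcases lt_trichotomy y x with hyx | rfl | hxy
  · exact absurd hfx (not_both hy hyx hfy)
  · rfl
  · exact absurd hfy (not_both hx hxy hfx)

section Kummer

variable {a b : ℝ}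

theorem poch_zero (a : ℝ) : poch a 0 = 1 := Finset.prod_range_zero _

theorem poch_succ (a : ℝ) (s : ℕ) : poch a (s + 1) = poch a s * (a + s) :=
  Finset.prod_range_succ _ s

theorem poch_nonneg (ha : 0 ≤ a) (s : ℕ) : 0 ≤ poch a s :=
  Finset.prod_nonneg fun _ _ => by positivity

/-- The coefficient `(a)_s / ((b)_s s!)` of `z ^ s` in the series defining `kummerM a b z`. -/
noncomputable def kummerCoeff (a b : ℝ) (s : ℕ) : ℝ :=
  poch a s / (poch b s * s.factorial)

theorem kummerCoeff_zero (a b : ℝ) : kummerCoeff a b 0 = 1 := by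
  simp [kummerCoeff, poch_zero]

theorem kummerCoeff_succ (a b : ℝ) (s : ℕ) :
    kummerCoeff a b (s + 1) = kummerCoeff a b s * ((a + s) / (b + s) * (1 / (s + 1))) := by
  simp only [kummerCoeff, poch_succ, Nat.factorial_succ, Nat.cast_mul, Nat.cast_succ,
    div_eq_mul_inv, mul_inv]
  ring

theorem kummerCoeff_nonneg (ha : 0 ≤ a) (hb : 0 < b) (s : ℕ) : 0 ≤ kummerCoeff a b s :=
  div_nonneg (poch_nonneg ha s) (mul_nonneg (poch_nonneg hb.le s) (Nat.cast_nonneg _))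

theorem summable_kummerCoeff_mul_pow (a b z : ℝ) :
    Summable fun s => kummerCoeff a b s * z ^ s := by
  have ratio_tendsto :
      Tendsto (fun s : ℕ => (a + s) / (b + s) * (1 / ((s : ℝ) + 1)) * z) atTop (𝓝 0) := by
    have h := tendsto_add_mul_div_add_mul_atTop_nhds a b (1 : ℝ) one_ne_zero
    simpa using (h.mul tendsto_one_div_add_atTop_nhds_zero_nat).mul_const z
  refine summable_of_ratio_norm_eventually_le (r := 1 / 2) (by norm_num) ?_
  have ratio_le := ratio_tendsto.norm.eventually_le_const (u := 1 / 2) (by norm_num)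
  filter_upwards [ratio_le] with s hs
  calc ‖kummerCoeff a b (s + 1) * z ^ (s + 1)‖
      = ‖(a + s) / (b + s) * (1 / ((s : ℝ) + 1)) * z‖ * ‖kummerCoeff a b s * z ^ s‖ := by
        rw [← norm_mul, kummerCoeff_succ]
        ring_nf
    _ ≤ 1 / 2 * ‖kummerCoeff a b s * z ^ s‖ := by gcongr

theorem continuous_kummerM (a b : ℝ) : Continuous (kummerM a b) := by
  refine continuous_iff_continuousAt.2 fun z₀ => ?_
  have hc : ContinuousOn (kummerM a b) (Metric.closedBall 0 (‖z₀‖ + 1)) := by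
    refine continuousOn_tsum (fun s => by fun_prop)
      (summable_kummerCoeff_mul_pow a b (‖z₀‖ + 1)).norm fun s z hz => ?_
    rw [mem_closedBall_zero_iff] at hz
    change ‖kummerCoeff a b s * z ^ s‖ ≤ _
    rw [norm_mul, norm_mul, norm_pow, norm_pow, Real.norm_of_nonneg (r := ‖z₀‖ + 1) (by positivity)]
    gcongr
  exact hc.continuousAt (Metric.closedBall_mem_nhds_of_mem (by simp))

theorem kummerM_zero (a b : ℝ) : kummerM a b 0 = 1 := by
  refine (tsum_eq_single 0 fun s hs => by simp [hs]).trans ?_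
  exact (mul_one _).trans (kummerCoeff_zero a b)

theorem monotoneOn_kummerM (ha : 0 ≤ a) (hb : 0 < b) : MonotoneOn (kummerM a b) (Ici 0) :=
  fun z hz w _ hzw =>
    (summable_kummerCoeff_mul_pow a b z).tsum_le_tsum
      (fun s => mul_le_mul_of_nonneg_left (pow_le_pow_left₀ hz hzw s) (kummerCoeff_nonneg ha hb s))
      (summable_kummerCoeff_mul_pow a b w)

theorem one_le_kummerM {z : ℝ} (ha : 0 ≤ a) (hb : 0 < b) (hz : 0 ≤ z) : 1 ≤ kummerM a b z :=
  (kummerM_zero a b).symm.trans_le (monotoneOn_kummerM ha hb self_mem_Ici hz hz)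

theorem continuous_mul_kummerM_sq (a b : ℝ) : Continuous fun x => x * kummerM a b (x ^ 2) :=
  continuous_id.mul ((continuous_kummerM a b).comp (continuous_pow 2))

theorem le_mul_kummerM_sq {x : ℝ} (ha : 0 ≤ a) (hb : 0 < b) (hx : 0 ≤ x) :
    x ≤ x * kummerM a b (x ^ 2) :=
  le_mul_of_one_le_right hx (one_le_kummerM ha hb (sq_nonneg x))

theorem strictMonoOn_mul_kummerM_sq (ha : 0 ≤ a) (hb : 0 < b) :
    StrictMonoOn (fun x => x * kummerM a b (x ^ 2)) (Ici 0) := fun x hx y hy hxy =>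
  mul_lt_mul hxy
    (monotoneOn_kummerM ha hb (sq_nonneg x) (sq_nonneg y) (pow_le_pow_left₀ hx hxy.le 2))
    (zero_lt_one.trans_le (one_le_kummerM ha hb (sq_nonneg x))) hy

/-- The function `x ↦ 1 / (x M(a, b, x²))`; the paper's `f₃` is the case `a = α / 2 + 1`,
`b = 3 / 2`. -/
noncomputable def kummerRecip (a b x : ℝ) : ℝ := 1 / (x * kummerM a b (x ^ 2))

theorem strictAntiOn_kummerRecip (ha : 0 ≤ a) (hb : 0 < b) :
    StrictAntiOn (kummerRecip a b) (Ioi 0) := fun x (hx : 0 < x) y (hy : 0 < y) hxy =>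
  one_div_lt_one_div_of_lt (hx.trans_le (le_mul_kummerM_sq ha hb hx.le))
    (strictMonoOn_mul_kummerM_sq ha hb (mem_Ici.2 hx.le) (mem_Ici.2 hy.le) hxy)

theorem continuousOn_kummerRecip (ha : 0 ≤ a) (hb : 0 < b) :
    ContinuousOn (kummerRecip a b) (Ioi 0) :=
  continuousOn_const.div (continuous_mul_kummerM_sq a b).continuousOn fun _ (hx : 0 < _) =>
    (hx.trans_le (le_mul_kummerM_sq ha hb hx.le)).ne'

theorem tendsto_kummerRecip_nhdsGT_zero (ha : 0 ≤ a) (hb : 0 < b) :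
    Tendsto (kummerRecip a b) (𝓝[>] 0) atTop := by
  have h0 : Tendsto (fun x => x * kummerM a b (x ^ 2)) (𝓝[>] 0) (𝓝[>] 0) := by
    refine tendsto_nhdsWithin_iff.2 ⟨?_, ?_⟩
    · exact ((continuous_mul_kummerM_sq a b).tendsto' 0 0 (by simp)).mono_left nhdsWithin_le_nhds
    · filter_upwards [self_mem_nhdsWithin] with x (hx : 0 < x)
      exact hx.trans_le (le_mul_kummerM_sq ha hb hx.le)
  exact (tendsto_inv_nhdsGT_zero.comp h0).congr fun _ => (one_div _).symm

theorem tendsto_kummerRecip_atTop (ha : 0 ≤ a) (hb : 0 < b) :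
    Tendsto (kummerRecip a b) atTop (𝓝 0) := by
  have h : Tendsto (fun x => x * kummerM a b (x ^ 2)) atTop atTop :=
    tendsto_atTop_mono' _ ((eventually_ge_atTop 0).mono fun _ => le_mul_kummerM_sq ha hb)
      tendsto_id
  exact h.const_div_atTop 1

end Kummer

section Tricomi

variable {a b z : ℝ}

/-- The integrand, as a function of `t`, of the integral defining `tricomiU a b z`. -/
noncomputable def tricomiIntegrand (a b z t : ℝ) : ℝ :=
  Real.exp (-z * t) * t ^ (a - 1) * (1 + t) ^ (b - a - 1)

theorem tricomiIntegrand_pos (a b z : ℝ) {t : ℝ} (ht : 0 < t) : 0 < tricomiIntegrand a b z t := by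
  unfold tricomiIntegrand
  positivity

theorem antitone_tricomiIntegrand (a b : ℝ) {t : ℝ} (ht : 0 < t) :
    Antitone fun z => tricomiIntegrand a b z t := by
  intro z w hzw
  dsimp only [tricomiIntegrand]
  gcongr

theorem measurable_tricomiIntegrand (a b z : ℝ) : Measurable (tricomiIntegrand a b z) := by
  unfold tricomiIntegrand
  fun_prop

theorem integrableOn_tricomiIntegrand (b : ℝ) (ha : 0 < a) (hz : 0 < z) :
    IntegrableOn (tricomiIntegrand a b z) (Ioi 0) := by
  set p := max 1 (b - a - 1)
  have hp : 1 ≤ p := le_max_left _ _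
  have integrableOn_rpow_mul_exp {s : ℝ} (hs : -1 < s) :
      IntegrableOn (fun t : ℝ => t ^ s * Real.exp (-z * t)) (Ioi 0) := by
    simpa using integrableOn_rpow_mul_exp_neg_mul_rpow hs one_pos hz
  have bound_integrable := ((integrableOn_rpow_mul_exp (s := a - 1) (by linarith)).add
    (integrableOn_rpow_mul_exp (s := a - 1 + p) (by linarith))).const_mul (2 ^ (p - 1))
  refine bound_integrable.mono' (measurable_tricomiIntegrand a b z).aestronglyMeasurable ?_
  filter_upwards [ae_restrict_mem measurableSet_Ioi] with t (ht : 0 < t)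
  have one_add_rpow_le : (1 + t) ^ (b - a - 1) ≤ 2 ^ (p - 1) * (1 + t ^ p) :=
    calc (1 + t) ^ (b - a - 1) ≤ (1 + t) ^ p :=
          Real.rpow_le_rpow_of_exponent_le (by linarith) (le_max_right _ _)
      _ ≤ 2 ^ (p - 1) * (1 + t ^ p) := by
          lift t to NNReal using ht.le
          simpa using NNReal.coe_le_coe.2 (NNReal.rpow_add_le_mul_rpow_add_rpow 1 t hp)
  calc ‖tricomiIntegrand a b z t‖
      = Real.exp (-z * t) * t ^ (a - 1) * (1 + t) ^ (b - a - 1) :=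
        Real.norm_of_nonneg (tricomiIntegrand_pos a b z ht).le
    _ ≤ Real.exp (-z * t) * t ^ (a - 1) * (2 ^ (p - 1) * (1 + t ^ p)) := by gcongr
    _ = 2 ^ (p - 1) *
          (t ^ (a - 1) * Real.exp (-z * t) + t ^ (a - 1 + p) * Real.exp (-z * t)) := by
        rw [Real.rpow_add ht]
        ring

theorem tricomiU_pos (b : ℝ) (ha : 0 < a) (hz : 0 < z) : 0 < tricomiU a b z := by
  refine mul_pos (one_div_pos.2 (Real.Gamma_pos_of_pos ha)) ?_
  have nonneg : 0 ≤ᵐ[volume.restrict (Ioi 0)] tricomiIntegrand a b z := by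
    filter_upwards [ae_restrict_mem measurableSet_Ioi] with t ht
    exact (tricomiIntegrand_pos a b z ht).le
  have support_inter : Function.support (tricomiIntegrand a b z) ∩ Ioi 0 = Ioi 0 :=
    inter_eq_right.2 fun t ht => (tricomiIntegrand_pos a b z ht).ne'
  refine (setIntegral_pos_iff_support_of_nonneg_ae nonneg
    (integrableOn_tricomiIntegrand b ha hz)).2 ?_
  simp [support_inter]

theorem antitoneOn_tricomiU (b : ℝ) (ha : 0 < a) : AntitoneOn (tricomiU a b) (Ioi 0) :=
  fun _ hz _ hw hzw =>
    mul_le_mul_of_nonneg_left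
      (setIntegral_mono_on (integrableOn_tricomiIntegrand b ha hw)
        (integrableOn_tricomiIntegrand b ha hz) measurableSet_Ioi
        fun _ ht => antitone_tricomiIntegrand a b ht hzw)
      (one_div_pos.2 (Real.Gamma_pos_of_pos ha)).le

theorem continuousOn_tricomiU (b : ℝ) (ha : 0 < a) : ContinuousOn (tricomiU a b) (Ioi 0) := by
  intro z₀ (hz₀ : 0 < z₀)
  refine (continuousAt_const.mul ?_).continuousWithinAt
  -- Near `z₀` the integrands are dominated by the one at `z₀ / 2`.
  refine continuousAt_of_dominated (F := tricomiIntegrand a b)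
    (.of_forall fun z => (measurable_tricomiIntegrand a b z).aestronglyMeasurable) ?_
    (integrableOn_tricomiIntegrand b ha (half_pos hz₀)) (.of_forall fun t => ?_)
  · filter_upwards [Ioi_mem_nhds (half_lt_self hz₀)] with z hz
    filter_upwards [ae_restrict_mem measurableSet_Ioi] with t ht
    rw [Real.norm_of_nonneg (tricomiIntegrand_pos a b z ht).le]
    exact antitone_tricomiIntegrand a b ht (le_of_lt hz)
  · unfold tricomiIntegrand
    fun_prop

/-- The function `x ↦ 1 / U(a, b, x² ω²)`; the paper's `f₁` is the case `a = α / 2 + 1 / 2`,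
`b = 1 / 2`. -/
noncomputable def tricomiRecip (a b ω x : ℝ) : ℝ := 1 / tricomiU a b (x ^ 2 * ω ^ 2)

variable {ω : ℝ}

theorem mapsTo_sq_mul_sq_Ioi (hω : ω ≠ 0) :
    MapsTo (fun x => x ^ 2 * ω ^ 2) (Ioi 0) (Ioi 0) := fun x (hx : 0 < x) => by
  simp only [mem_Ioi]
  positivity

theorem tricomiRecip_pos {x : ℝ} (b : ℝ) (ha : 0 < a) (hω : ω ≠ 0) (hx : 0 < x) :
    0 < tricomiRecip a b ω x :=
  one_div_pos.2 (tricomiU_pos b ha (mapsTo_sq_mul_sq_Ioi hω hx))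

theorem monotoneOn_tricomiRecip (b : ℝ) (ha : 0 < a) (hω : ω ≠ 0) :
    MonotoneOn (tricomiRecip a b ω) (Ioi 0) := fun x (hx : 0 < x) y (hy : 0 < y) hxy =>
  one_div_le_one_div_of_le (tricomiU_pos b ha (mapsTo_sq_mul_sq_Ioi hω hy))
    (antitoneOn_tricomiU b ha (mapsTo_sq_mul_sq_Ioi hω hx) (mapsTo_sq_mul_sq_Ioi hω hy)
      (mul_le_mul_of_nonneg_right (pow_le_pow_left₀ hx.le hxy 2) (sq_nonneg ω)))

theorem continuousOn_tricomiRecip (b : ℝ) (ha : 0 < a) (hω : ω ≠ 0) :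
    ContinuousOn (tricomiRecip a b ω) (Ioi 0) :=
  continuousOn_const.div
    ((continuousOn_tricomiU b ha).comp (by fun_prop) (mapsTo_sq_mul_sq_Ioi hω))
    fun _ hx => (tricomiU_pos b ha (mapsTo_sq_mul_sq_Ioi hω hx)).ne'

end Tricomi

theorem statement_15_general {a b c p A B ω : ℝ} (d : ℝ) (ha : 0 ≤ a) (hb : 0 < b) (hc : 0 < c)
    (hp : 0 ≤ p) (hA : 0 < A) (hB : 0 ≤ B) (hω : ω ≠ 0) :
    ∃! x : ℝ, 0 < x ∧ A * kummerRecip a b x - B * tricomiRecip c d ω x = x ^ p := by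
  simp only [sub_eq_iff_eq_add']
  refine existsUnique_eq_of_strictAntiOn_of_monotoneOn (l := 0) (x₀ := 1) ?_ ?_ ?_ ?_ ?_ ?_
    one_pos ?_
  · exact fun x hx y hy hxy =>
      mul_lt_mul_of_pos_left (strictAntiOn_kummerRecip ha hb hx hy hxy) hA
  · exact continuousOn_const.mul (continuousOn_kummerRecip ha hb)
  · exact (tendsto_kummerRecip_nhdsGT_zero ha hb).const_mul_atTop hA
  · simpa using (tendsto_kummerRecip_atTop ha hb).const_mul A
  · exact fun x hx y hy hxy => add_le_add
      (mul_le_mul_of_nonneg_left (monotoneOn_tricomiRecip d hc hω hx hy hxy) hB)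
      (Real.rpow_le_rpow (le_of_lt hx) hxy hp)
  · exact (continuousOn_const.mul (continuousOn_tricomiRecip d hc hω)).add
      (continuousOn_id.rpow_const fun _ _ => Or.inr hp)
  · have := tricomiRecip_pos d hc hω one_pos
    positivity

/-- the equation
`(k_l T_∞/(2^{α+1} d_l^{α/2+1} γ)) f₃(x) − (k_s T_i d_s^{(α−1)/2}/(γ d_l^{(α+1)/2})) f₁(x) = x^{α+1}`
has exactly one positive solution. -/
theorem statement_15 (α kl ks dl ds γ Ti Tinf : ℝ)
    (hα : 0 < α) (hkl : 0 < kl) (hks : 0 < ks) (hdl : 0 < dl) (hds : 0 < ds)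
    (hγ : 0 < γ) (hTi : 0 < Ti) (hTinf : 0 < Tinf)
    (ω : ℝ) (hω : ω = Real.sqrt (dl / ds)) :
    ∃! x : ℝ, 0 < x ∧
      kl * Tinf / ((2:ℝ) ^ (α + 1) * dl ^ (α / 2 + 1) * γ) *
          (1 / (x * kummerM (α / 2 + 1) (3 / 2) (x ^ 2)))
        - ks * Ti * ds ^ ((α - 1) / 2) / (γ * dl ^ ((α + 1) / 2)) *
          (1 / tricomiU (α / 2 + 1 / 2) (1 / 2) (x ^ 2 * ω ^ 2))
        = x ^ (α + 1) :=
  statement_15_general _ (by positivity) (by norm_num) (by positivity)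
    (by positivity) (by positivity) (by positivity) (hω ▸ (Real.sqrt_pos.2 (div_pos hdl hds)).ne')
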